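/- For every rooted tree-structure Φ, the k-linear map ρ : T_rt(Φ) → T_rt(Φ) ⊗ T_rt(Φ) defined by ρ((T,s)) = Σ_{e ∈ E(T)} (T_e^1, s|_{T_e^1}) ⊗ (T_e^2, s|_{T_e^2}) is a (left) pre-Lie comultiplication on T_rt(Φ). -/

import Mathlib

/-!
Statement 3: for every rooted tree-structure `Φ`, the map
`ρ((T,s)) = Σ_{e ∈ E(T)} (T_e^1, s|_{T_e^1}) ⊗ (T_e^2, s|_{T_e^2})` is a (left) pre-Lie
comultiplication on `T_rt(Φ)`, the free `k`-module on isomorphism classes of pairs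
`(T,s)` with `T` a rooted tree and `s ∈ Φ(T)`.
-/

universe u

open TensorProduct

noncomputable section

section PreLie

variable (k : Type*) [CommRing k] (g : Type*) [AddCommGroup g] [Module k g]

/-- `τ_{(12)}` on the triple tensor product `g ⊗ (g ⊗ g)`: `x⊗y⊗z ↦ y⊗x⊗z`. -/
def tau12 : g ⊗[k] (g ⊗[k] g) →ₗ[k] g ⊗[k] (g ⊗[k] g) :=
  (TensorProduct.assoc k g g g).toLinearMap ∘ₗ
    (LinearMap.rTensor g (TensorProduct.comm k g g).toLinearMap) ∘ₗ
    (TensorProduct.assoc k g g g).symm.toLinearMap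

variable {k g}

/-- `δ₀ : g → g ⊗ g` is a (left) pre-Lie comultiplication if
`(Id − τ_{(12)}) ∘ (δ₀ ⊗ Id − Id ⊗ δ₀) ∘ δ₀ = 0`. -/
def IsPreLieComul (δ : g →ₗ[k] g ⊗[k] g) : Prop :=
  (LinearMap.id - tau12 k g) ∘ₗ
      (((TensorProduct.assoc k g g g).toLinearMap ∘ₗ LinearMap.rTensor g δ)
        - LinearMap.lTensor g δ) ∘ₗ δ = 0

end PreLie

/-! ### Rooted trees

Rooted trees are represented by planar rooted trees (`PTree`); vertices are addressed by
the list of child-indices leading to them from the root (the root is `[]`), and an edge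
is identified with the address of its endpoint farther from the root. -/

/-- Planar rooted trees. -/
inductive PTree : Type
  | node : List PTree → PTree

/-- `IsVtx a T`: the address `a` is a vertex of `T`. -/
def IsVtx : List ℕ → PTree → Prop
  | [], _ => True
  | i :: a, .node l => ∃ u, l[i]? = some u ∧ IsVtx a u

mutual
/-- The list of all vertex addresses of a tree (the root is `[]`). -/
def vtxList : PTree → List (List ℕ)
  | .node l => [] :: vtxListL 0 l
/-- Auxiliary to `vtxList`. -/
def vtxListL : ℕ → List PTree → List (List ℕ)
  | _, [] => []
  | i, u :: ts => (vtxList u).map (i :: ·) ++ vtxListL (i+1) ts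
end

/-- The edges of a tree, identified with the non-root vertices. -/
def edgeList (T : PTree) : List (List ℕ) := (vtxList T).filter (· ≠ [])

/-- The subtree of `T` rooted at the vertex `a` (if `a` is a vertex). -/
def subAt : List ℕ → PTree → Option PTree
  | [], u => some u
  | i :: a, .node l => match l[i]? with
    | some u => subAt a u
    | none => none

/-- `T` with the subtree at the (non-root) vertex `a` removed. -/
def prune : List ℕ → PTree → PTree
  | [], u => u
  | [i], .node l => .node (l.eraseIdx i)
  | i :: j :: a, .node l => match l[i]? with
    | some u => .node (l.set i (prune (j :: a) u))
    | none => .node l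

/-- The canonical embedding of the vertices of `prune a T` into the vertices of `T`. -/
def pruneEmb (a : List ℕ) (b : List ℕ) : List ℕ :=
  match a.getLast? with
  | none => b
  | some i =>
      let a' := a.dropLast
      if a'.isPrefixOf b then
        match b.drop a'.length with
        | [] => b
        | j :: rest => if i ≤ j then a' ++ (j+1) :: rest else b
      else b

/-- An embedding of rooted trees `T → T'`, given as a map on vertex addresses: it is
injective on vertices, sends edges to edges, and sends the root of `T` to the vertex of
the image closest to the root of `T'` (i.e. the image of the root is an ancestor, in
fact a prefix, of every vertex of the image). -/
def IsEmbedding (T T' : PTree) (f : List ℕ → List ℕ) : Prop :=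
  (∀ a, IsVtx a T → IsVtx (f a) T') ∧
  (∀ a b, IsVtx a T → IsVtx b T → f a = f b → a = b) ∧
  (∀ a i, IsVtx (a ++ [i]) T →
    ((f (a ++ [i]) ≠ [] ∧ f a = (f (a ++ [i])).dropLast) ∨
     (f a ≠ [] ∧ f (a ++ [i]) = (f a).dropLast))) ∧
  (∀ a, IsVtx a T → f [] <+: f a)

/-- A rooted tree-structure: a contravariant functor from the category of rooted trees
and embeddings to sets. -/
structure TreeStructure : Type (u + 1) where
  /-- The set attached to each rooted tree. -/
  F : PTree → Type u
  /-- Restriction along an embedding. -/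
  res : ∀ {T T' : PTree} (f : List ℕ → List ℕ), IsEmbedding T T' f → F T' → F T
  res_id : ∀ (T : PTree) (h : IsEmbedding T T id) (x : F T), res id h x = x
  res_comp : ∀ {T T' T'' : PTree} (f g : List ℕ → List ℕ)
      (hf : IsEmbedding T T' f) (hg : IsEmbedding T' T'' g)
      (hgf : IsEmbedding T T'' (g ∘ f)) (x : F T'' ),
      res (g ∘ f) hgf x = res f hf (res g hg x)

/-- Pairs `(T, s)` with `T` a rooted tree and `s ∈ Φ(T)`. -/
def TS (Φ : TreeStructure.{u}) : Type u := Σ T : PTree, Φ.F T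

/-- Isomorphism of pairs: an isomorphism of rooted trees (a surjective embedding) whose
pullback carries the structure of one pair to that of the other. -/
def pairRel (Φ : TreeStructure.{u}) (x y : TS Φ) : Prop :=
  ∃ (f : List ℕ → List ℕ) (h : IsEmbedding x.1 y.1 f),
    (∀ b, IsVtx b y.1 → ∃ a, IsVtx a x.1 ∧ f a = b) ∧ Φ.res f h y.2 = x.2

/-- Isomorphism classes of pairs `(T, s)`. -/
def TSIso (Φ : TreeStructure.{u}) : Type u := Quot (pairRel Φ)

open scoped Classical

/-- The sum of a list of elements of an additive commutative monoid. -/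
def lsum {M : Type*} [AddCommMonoid M] (l : List M) : M := l.foldr (· + ·) 0

/-- The zero element of a tensor product. -/
def tzero (k : Type*) [CommRing k] (M N : Type*) [AddCommGroup M] [Module k M]
    [AddCommGroup N] [Module k N] : M ⊗[k] N := 0

variable (k : Type*) [CommRing k] (Φ : TreeStructure.{u})

/-- `T_rt(Φ)`: the free `k`-module on the isomorphism classes of pairs `(T,s)`. -/
abbrev TrtS := TSIso Φ →₀ k

/-- The summand of `ρ` corresponding to the edge `e` of the pair `(T,s)`: cut the edge
`e`, obtaining the subtree `T_e^1` at `e` (rooted at the endpoint of `e`) and the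
complementary tree `T_e^2` containing the root, each with the restricted structure. -/
def rhoSTerm (p : TS Φ) (e : List ℕ) : TrtS k Φ ⊗[k] TrtS k Φ :=
  match subAt e p.1 with
  | some T1 =>
      let T2 := prune e p.1
      if h : IsEmbedding T1 p.1 (fun b => e ++ b) ∧ IsEmbedding T2 p.1 (pruneEmb e) then
        Finsupp.single (Quot.mk (pairRel Φ) ⟨T1, Φ.res _ h.1 p.2⟩) (1 : k) ⊗ₜ[k]
          Finsupp.single (Quot.mk (pairRel Φ) ⟨T2, Φ.res _ h.2 p.2⟩) (1 : k)
      else tzero k _ _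
  | none => tzero k _ _

/-- The pre-Lie comultiplication
`ρ((T,s)) = Σ_{e ∈ E(T)} (T_e^1, s|_{T_e^1}) ⊗ (T_e^2, s|_{T_e^2})` on `T_rt(Φ)`
(computed on a representative pair; the result does not depend on the choice). -/
def rhoS : TrtS k Φ →ₗ[k] TrtS k Φ ⊗[k] TrtS k Φ :=
  Finsupp.lift (TrtS k Φ ⊗[k] TrtS k Φ) k (TSIso Φ) fun q =>
    lsum ((edgeList q.out.1).map (rhoSTerm k Φ q.out))

/-! ### Vertices and edges -/

mutual

theorem mem_vtxList : ∀ (T : PTree) (a : List ℕ), a ∈ vtxList T ↔ IsVtx a T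
  | .node l, [] => by simp [vtxList, IsVtx]
  | .node l, i :: a => by
    rw [vtxList, List.mem_cons, mem_vtxListL l 0]
    simp [IsVtx]

theorem mem_vtxListL : ∀ (l : List PTree) (n : ℕ) (a : List ℕ),
    a ∈ vtxListL n l ↔ ∃ i b u, a = (n + i) :: b ∧ l[i]? = some u ∧ IsVtx b u
  | [], n, a => by simp [vtxListL]
  | u :: ts, n, a => by
    rw [vtxListL, List.mem_append, mem_vtxListL ts (n + 1), List.mem_map]
    constructor
    · rintro (⟨b, hb, rfl⟩ | ⟨i, b, v, rfl, hv, hb⟩)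
      · exact ⟨0, b, u, rfl, rfl, (mem_vtxList u b).1 hb⟩
      · exact ⟨i + 1, b, v, by congr 1; omega, hv, hb⟩
    · rintro ⟨_ | i, b, v, rfl, hv, hb⟩
      · obtain rfl : u = v := by simpa using hv
        exact Or.inl ⟨b, (mem_vtxList u b).2 hb, rfl⟩
      · exact Or.inr ⟨i, b, v, by congr 1; omega, hv, hb⟩

end

mutual

theorem nodup_vtxList : ∀ T : PTree, (vtxList T).Nodup
  | .node l => by
    rw [vtxList, List.nodup_cons, mem_vtxListL]
    exact ⟨by simp, nodup_vtxListL l 0⟩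

theorem nodup_vtxListL : ∀ (l : List PTree) (n : ℕ), (vtxListL n l).Nodup
  | [], n => by simp [vtxListL]
  | u :: ts, n => by
    rw [vtxListL, List.nodup_append']
    refine ⟨(nodup_vtxList u).map (List.cons_injective), nodup_vtxListL ts (n + 1), ?_⟩
    intro a ha hb
    obtain ⟨b, -, rfl⟩ := List.mem_map.1 ha
    obtain ⟨i, c, v, h, -⟩ := (mem_vtxListL _ _ _).1 hb
    have := (List.cons.inj h).1
    omega

end

/-- The set of vertices of a tree. -/
def vtx (T : PTree) : Set (List ℕ) := {a | IsVtx a T}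

/-- The finite set of edges of a tree. -/
def edges (T : PTree) : Finset (List ℕ) := (edgeList T).toFinset

theorem mem_edges {T : PTree} {e : List ℕ} : e ∈ edges T ↔ IsVtx e T ∧ e ≠ [] := by
  simp [edges, edgeList, mem_vtxList]

theorem lsum_map_edgeList {M : Type*} [AddCommMonoid M] (T : PTree) (f : List ℕ → M) :
    lsum ((edgeList T).map f) = ∑ e ∈ edges T, f e :=
  (List.sum_toFinset f ((nodup_vtxList T).filter _)).symm

theorem isVtx_nil (T : PTree) : IsVtx [] T := by
  cases T; trivial

theorem IsVtx.of_append {T : PTree} {a b : List ℕ} (h : IsVtx (a ++ b) T) : IsVtx a T := by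
  induction a generalizing T with
  | nil => exact isVtx_nil T
  | cons i a ih =>
    cases T
    obtain ⟨u, hu, h⟩ := h
    exact ⟨u, hu, ih h⟩

theorem exists_subAt {T : PTree} {e : List ℕ} (h : IsVtx e T) :
    ∃ T₁, subAt e T = some T₁ ∧ ∀ b, IsVtx b T₁ ↔ IsVtx (e ++ b) T := by
  induction e generalizing T with
  | nil => cases T; exact ⟨_, rfl, fun b => Iff.rfl⟩
  | cons i a ih =>
    cases T
    obtain ⟨u, hu, h⟩ := h
    obtain ⟨T₁, h₁, h₂⟩ := ih h
    refine ⟨T₁, by simp [subAt, hu, h₁], fun b => ?_⟩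
    simp [IsVtx, hu, h₂]

/-! ### The embedding of a pruned tree -/

theorem pruneEmb_nil (e : List ℕ) : pruneEmb e [] = [] := by
  unfold pruneEmb
  cases e.getLast? with
  | none => rfl
  | some i => simp

theorem pruneEmb_singleton_cons (i j : ℕ) (b : List ℕ) :
    pruneEmb [i] (j :: b) = (if i ≤ j then j + 1 else j) :: b := by
  simp only [pruneEmb, List.getLast?_singleton, List.dropLast_singleton]
  split_ifs <;> simp_all

theorem pruneEmb_cons_cons (i i' j : ℕ) (a b : List ℕ) :
    pruneEmb (i :: i' :: a) (j :: b) =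
      if i = j then j :: pruneEmb (i' :: a) b else j :: b := by
  simp only [pruneEmb, List.getLast?_cons_cons, List.dropLast_cons_cons]
  cases h : (i' :: a).getLast? with
  | none => simp at h
  | some m =>
    by_cases hij : i = j
    · subst hij
      by_cases hp : (i' :: a).dropLast.isPrefixOf b
      · simp only [List.isPrefixOf, hp, List.length_cons, List.drop_succ_cons]
        cases List.drop (i' :: a).dropLast.length b <;> simp
        split_ifs <;> rfl
      · simp [List.isPrefixOf, hp]
    · simp [List.isPrefixOf, hij]

theorem pruneEmb_injective (e : List ℕ) : Function.Injective (pruneEmb e) := by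
  match e with
  | [] => exact fun _ _ h => h
  | [i] =>
    rintro (_ | ⟨j, b⟩) (_ | ⟨j', b'⟩) h <;>
      simp only [pruneEmb_nil, pruneEmb_singleton_cons] at h
    · rfl
    · simp at h
    · simp at h
    · obtain ⟨hj, rfl⟩ := List.cons.inj h
      congr 1
      split_ifs at hj <;> omega
  | i :: i' :: a =>
    have ih := pruneEmb_injective (i' :: a)
    rintro (_ | ⟨j, b⟩) (_ | ⟨j', b'⟩) h
    · rfl
    · simp only [pruneEmb_nil, pruneEmb_cons_cons] at h
      split_ifs at h
    · simp only [pruneEmb_nil, pruneEmb_cons_cons] at h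
      split_ifs at h
    · simp only [pruneEmb_cons_cons] at h
      split_ifs at h with h₁ h₂ h₂ <;> obtain ⟨rfl, hb⟩ := List.cons.inj h
      · rw [ih hb]
      · exact absurd h₁ h₂
      · exact absurd h₂ h₁
      · rw [hb]

theorem range_pruneEmb {e : List ℕ} (he : e ≠ []) :
    Set.range (pruneEmb e) = {b | ¬ e <+: b} := by
  match e with
  | [i] =>
    ext b
    simp only [Set.mem_range, Set.mem_ofPred_eq]
    constructor
    · rintro ⟨_ | ⟨j, b⟩, rfl⟩
      · simp [pruneEmb_nil]
      · rw [pruneEmb_singleton_cons, List.cons_prefix_cons]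
        split_ifs <;> omega
    · intro h
      rcases b with _ | ⟨j, b⟩
      · exact ⟨[], pruneEmb_nil _⟩
      · have hij : i ≠ j := fun hij => h (by simp [hij])
        rcases lt_or_gt_of_ne hij with hlt | hlt
        · refine ⟨(j - 1) :: b, ?_⟩
          rw [pruneEmb_singleton_cons, if_pos (by omega)]
          congr 1
          omega
        · refine ⟨j :: b, ?_⟩
          rw [pruneEmb_singleton_cons, if_neg (by omega)]
  | i :: i' :: a =>
    have ih := Set.ext_iff.1 (range_pruneEmb (List.cons_ne_nil i' a))
    simp only [Set.mem_range, Set.mem_ofPred_eq] at ih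
    ext b
    simp only [Set.mem_range, Set.mem_ofPred_eq]
    constructor
    · rintro ⟨_ | ⟨j, b⟩, rfl⟩
      · simp [pruneEmb_nil]
      · rw [pruneEmb_cons_cons]
        split_ifs with hij
        · rw [List.cons_prefix_cons]
          exact fun h => (ih _).1 ⟨b, rfl⟩ h.2
        · simp [List.cons_prefix_cons, hij]
    · intro h
      rcases b with _ | ⟨j, b⟩
      · exact ⟨[], pruneEmb_nil _⟩
      · by_cases hij : i = j
        · subst hij
          obtain ⟨c, hc⟩ := (ih b).2 fun hp => h (List.cons_prefix_cons.2 ⟨rfl, hp⟩)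
          exact ⟨i :: c, by rw [pruneEmb_cons_cons, if_pos rfl, hc]⟩
        · exact ⟨j :: b, by rw [pruneEmb_cons_cons, if_neg hij]⟩

theorem pruneEmb_concat {e : List ℕ} (he : e ≠ []) (b : List ℕ) (j : ℕ) :
    ∃ j', pruneEmb e (b ++ [j]) = pruneEmb e b ++ [j'] := by
  match e, b with
  | [i], [] => exact ⟨_, by rw [List.nil_append, pruneEmb_singleton_cons, pruneEmb_nil]; rfl⟩
  | [i], m :: b =>
    exact ⟨j, by rw [List.cons_append, pruneEmb_singleton_cons, pruneEmb_singleton_cons]; rfl⟩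
  | i :: i' :: a, [] =>
    refine ⟨j, ?_⟩
    rw [List.nil_append, pruneEmb_cons_cons, pruneEmb_nil, pruneEmb_nil]
    split_ifs <;> rfl
  | i :: i' :: a, m :: b =>
    obtain ⟨j', h⟩ := pruneEmb_concat (List.cons_ne_nil i' a) b j
    rw [List.cons_append, pruneEmb_cons_cons, pruneEmb_cons_cons]
    split_ifs
    · exact ⟨j', by rw [h]; rfl⟩
    · exact ⟨j, rfl⟩

theorem isVtx_prune {T : PTree} {e : List ℕ} (he : e ≠ []) (b : List ℕ) :
    IsVtx b (prune e T) ↔ IsVtx (pruneEmb e b) T := by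
  match e, T, b with
  | e, T, [] => simp [pruneEmb_nil, isVtx_nil]
  | [i], .node l, m :: b =>
    rw [pruneEmb_singleton_cons]
    simp only [prune, IsVtx, List.getElem?_eraseIdx]
    by_cases h : i ≤ m
    · simp [h, Nat.not_lt.2 h]
    · simp [h, Nat.not_le.1 h]
  | i :: i' :: a, .node l, m :: b =>
    rw [pruneEmb_cons_cons, prune]
    cases hi : l[i]? with
    | none =>
      by_cases him : i = m
      · subst him
        simp [IsVtx, hi]
      · simp [him]
    | some u =>
      have ih := isVtx_prune (T := u) (List.cons_ne_nil i' a) b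
      by_cases him : i = m
      · subst him
        obtain ⟨hl, hu⟩ := List.getElem?_eq_some_iff.1 hi
        simp [IsVtx, hl, hu, ih]
      · simp [IsVtx, him]

/-! ### Embeddings -/

section Embedding

variable {T T' T'' : PTree} {f g : List ℕ → List ℕ}

theorem isEmbedding_of_child (hv : ∀ a, IsVtx a T → IsVtx (f a) T')
    (hinj : Set.InjOn f (vtx T))
    (hc : ∀ a i, IsVtx (a ++ [i]) T → ∃ j, f (a ++ [i]) = f a ++ [j]) :
    IsEmbedding T T' f := by
  refine ⟨hv, fun a b ha hb h => hinj ha hb h, fun a i h => Or.inl ?_, fun a ha => ?_⟩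
  · obtain ⟨j, hj⟩ := hc a i h
    simp [hj]
  · induction a using List.reverseRecOn with
    | nil => exact List.prefix_rfl
    | append_singleton a i ih =>
      obtain ⟨j, hj⟩ := hc a i ha
      rw [hj]
      exact (ih ha.of_append).trans (List.prefix_append _ _)

namespace IsEmbedding

theorem injOn (h : IsEmbedding T T' f) : Set.InjOn f (vtx T) :=
  fun _ ha _ hb hab => h.2.1 _ _ ha hb hab

theorem child (h : IsEmbedding T T' f) (a : List ℕ) (i : ℕ) (ha : IsVtx (a ++ [i]) T) :
    ∃ j, f (a ++ [i]) = f a ++ [j] := by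
  induction a using List.reverseRecOn generalizing i with
  | nil =>
    rcases h.2.2.1 [] i ha with ⟨h₁, h₂⟩ | ⟨h₁, h₂⟩
    · exact ⟨_, by rw [h₂, List.dropLast_append_getLast h₁]⟩
    · have h₃ := (h.2.2.2 _ ha).length_le
      rw [h₂, List.length_dropLast] at h₃
      have := List.length_pos_iff.2 h₁
      omega
  | append_singleton b m ih =>
    rcases h.2.2.1 _ i ha with ⟨h₁, h₂⟩ | ⟨h₁, h₂⟩
    · exact ⟨_, by rw [h₂, List.dropLast_append_getLast h₁]⟩
    · obtain ⟨j, hj⟩ := ih m ha.of_append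
      rw [hj, List.dropLast_concat] at h₂
      have := congrArg List.length (h.2.1 _ _ ha ha.of_append.of_append h₂)
      simp at this

theorem append (h : IsEmbedding T T' f) (a b : List ℕ) (hab : IsVtx (a ++ b) T) :
    ∃ c, f (a ++ b) = f a ++ c ∧ c.length = b.length := by
  induction b using List.reverseRecOn with
  | nil => exact ⟨[], by simp⟩
  | append_singleton b i ih =>
    rw [← List.append_assoc] at hab ⊢
    obtain ⟨c, hc, hl⟩ := ih hab.of_append
    obtain ⟨j, hj⟩ := h.child _ i hab
    exact ⟨c ++ [j], by rw [hj, hc, List.append_assoc], by simp [hl]⟩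

theorem length_apply (h : IsEmbedding T T' f) {a : List ℕ} (ha : IsVtx a T) :
    (f a).length = (f []).length + a.length := by
  obtain ⟨c, hc, hl⟩ := h.append [] a ha
  rw [List.nil_append] at hc
  rw [hc, List.length_append, hl]

theorem prefix_iff (h : IsEmbedding T T' f) {a b : List ℕ} (ha : IsVtx a T) (hb : IsVtx b T) :
    f a <+: f b ↔ a <+: b := by
  constructor
  · intro hp
    have hle : a.length ≤ b.length := by
      have := hp.length_le
      rw [h.length_apply ha, h.length_apply hb] at this
      omega
    have hb' := hb
    rw [← List.take_append_drop a.length b] at hb'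
    have hv := hb'.of_append
    obtain ⟨c, hc, -⟩ := h.append _ _ hb'
    rw [List.take_append_drop] at hc
    have heq : f a = f (b.take a.length) := by
      refine (List.prefix_of_prefix_length_le hp ⟨c, hc.symm⟩ ?_).eq_of_length ?_ <;>
        rw [h.length_apply ha, h.length_apply hv] <;> simp [hle]
    rw [h.2.1 _ _ ha hv heq]
    exact List.take_prefix _ _
  · rintro ⟨c, rfl⟩
    obtain ⟨d, hd, -⟩ := h.append _ _ hb
    exact ⟨d, hd.symm⟩

theorem comp (hg : IsEmbedding T' T'' g) (hf : IsEmbedding T T' f) :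
    IsEmbedding T T'' (g ∘ f) := by
  refine isEmbedding_of_child (fun a ha => hg.1 _ (hf.1 _ ha))
    (hg.injOn.comp hf.injOn fun a ha => hf.1 a ha) fun a i ha => ?_
  obtain ⟨j, hj⟩ := hf.child a i ha
  have := hf.1 _ ha
  rw [hj] at this
  obtain ⟨m, hm⟩ := hg.child _ j this
  exact ⟨m, by simp [hj, hm]⟩

theorem congr (hf : IsEmbedding T T' f) (h : Set.EqOn f g (vtx T)) : IsEmbedding T T' g := by
  refine isEmbedding_of_child (fun a ha => h ha ▸ hf.1 a ha) (hf.injOn.congr h) fun a i ha => ?_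
  rw [← h (show a ∈ vtx T from ha.of_append), ← h ha]
  exact hf.child a i ha

theorem id (T : PTree) : IsEmbedding T T id :=
  isEmbedding_of_child (fun _ ha => ha) (Set.injOn_id _) fun _ i _ => ⟨i, rfl⟩

/-- An embedding factors through every embedding with a larger image. -/
theorem exists_factor {T₁ T₂ : PTree} (hf : IsEmbedding T₁ T f) (hg : IsEmbedding T₂ T g)
    (hfg : f '' vtx T₁ ⊆ g '' vtx T₂) :
    ∃ m, IsEmbedding T₁ T₂ m ∧ Set.EqOn (g ∘ m) f (vtx T₁) := by
  have : ∀ a, ∃ b, a ∈ vtx T₁ → b ∈ vtx T₂ ∧ g b = f a := fun a => by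
    by_cases ha : a ∈ vtx T₁
    · obtain ⟨b, hb⟩ := hfg ⟨a, ha, rfl⟩
      exact ⟨b, fun _ => hb⟩
    · exact ⟨[], fun h => absurd h ha⟩
  choose m hm using this
  refine ⟨m, isEmbedding_of_child (fun a ha => (hm a ha).1) (fun a ha b hb hab => ?_)
    fun a i ha => ?_, fun a ha => (hm a ha).2⟩
  · exact hf.injOn ha hb (by rw [← (hm a ha).2, ← (hm b hb).2, hab])
  · obtain ⟨hv, he⟩ := hm _ ha
    obtain ⟨hv', he'⟩ := hm a ha.of_append
    obtain ⟨j, hj⟩ := hf.child a i ha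
    obtain ⟨c, hc⟩ : m a <+: m (a ++ [i]) := by
      rw [← hg.prefix_iff hv' hv, he, he', hj]
      exact List.prefix_append _ _
    rw [← hc] at hv he ⊢
    have h₁ := hg.length_apply hv
    rw [he, hj, ← he', List.length_append, hg.length_apply hv', List.length_append] at h₁
    obtain ⟨x, rfl⟩ := List.length_eq_one_iff.1 (show c.length = 1 by simp at h₁; omega)
    exact ⟨x, rfl⟩

end IsEmbedding

/-- The vertices lying above a vertex `e`, that is, having `e` as an ancestor. -/
def above (e : List ℕ) : Set (List ℕ) := {b | e <+: b}

theorem isEmbedding_append {T₁ : PTree} {e : List ℕ}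
    (h : ∀ b, IsVtx b T₁ ↔ IsVtx (e ++ b) T) :
    IsEmbedding T₁ T (fun b => e ++ b) :=
  isEmbedding_of_child (fun a => (h a).1) (List.append_right_injective e).injOn
    fun a i _ => ⟨i, by simp⟩

theorem image_append {T₁ : PTree} {e : List ℕ} (h : ∀ b, IsVtx b T₁ ↔ IsVtx (e ++ b) T) :
    (fun b => e ++ b) '' vtx T₁ = vtx T ∩ above e := by
  ext b
  constructor
  · rintro ⟨c, hc, rfl⟩
    exact ⟨(h c).1 hc, List.prefix_append _ _⟩
  · rintro ⟨hb, c, rfl⟩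
    exact ⟨c, (h c).2 hb, rfl⟩

theorem isEmbedding_pruneEmb {e : List ℕ} (he : e ≠ []) :
    IsEmbedding (prune e T) T (pruneEmb e) :=
  isEmbedding_of_child (fun a => (isVtx_prune he a).1) (pruneEmb_injective e).injOn
    fun a i _ => pruneEmb_concat he a i

theorem image_pruneEmb {e : List ℕ} (he : e ≠ []) :
    pruneEmb e '' vtx (prune e T) = vtx T \ above e := by
  have hr := Set.ext_iff.1 (range_pruneEmb he)
  ext b
  constructor
  · rintro ⟨c, hc, rfl⟩
    exact ⟨(isVtx_prune he c).1 hc, (hr _).1 ⟨c, rfl⟩⟩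
  · rintro ⟨hb, hn⟩
    obtain ⟨c, rfl⟩ := (hr b).2 hn
    exact ⟨c, (isVtx_prune he c).2 hb, rfl⟩

end Embedding

/-! ### The class of a subtree -/

section Class

variable {Φ}

theorem mk_res_congr {T T' : PTree} {f g : List ℕ → List ℕ} (hf : IsEmbedding T T' f)
    (hg : IsEmbedding T T' g) (h : Set.EqOn f g (vtx T)) (s : Φ.F T') :
    Quot.mk (pairRel Φ) ⟨T, Φ.res f hf s⟩ = Quot.mk (pairRel Φ) ⟨T, Φ.res g hg s⟩ := by
  let r : List ℕ → List ℕ := fun a => if a ∈ vtx T then a else []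
  have hr : Set.EqOn id r (vtx T) := fun a ha => by simp [r, ha]
  have hre : IsEmbedding T T r := (IsEmbedding.id T).congr hr
  have key : ∀ x : Φ.F T,
      Quot.mk (pairRel Φ) ⟨T, x⟩ = Quot.mk (pairRel Φ) ⟨T, Φ.res r hre x⟩ := fun x =>
    (Quot.sound ⟨r, hre, fun b hb => ⟨b, hb, (hr hb).symm⟩, rfl⟩).symm
  have hfg : f ∘ r = g ∘ r := by
    funext a
    by_cases ha : a ∈ vtx T
    · simp [r, ha, h ha]
    · simp [r, ha, h (show [] ∈ vtx T from isVtx_nil T)]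
  rw [key, key (Φ.res g hg s), ← Φ.res_comp r f hre hf (hf.comp hre),
    ← Φ.res_comp r g hre hg (hg.comp hre)]
  simp only [hfg]

theorem mk_res_eq_of_image_eq {T T₁ T₂ : PTree} {f g : List ℕ → List ℕ}
    (hf : IsEmbedding T₁ T f) (hg : IsEmbedding T₂ T g) (h : f '' vtx T₁ = g '' vtx T₂)
    (s : Φ.F T) :
    Quot.mk (pairRel Φ) ⟨T₁, Φ.res f hf s⟩ = Quot.mk (pairRel Φ) ⟨T₂, Φ.res g hg s⟩ := by
  obtain ⟨m, hm, hgm⟩ := hf.exists_factor hg h.subset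
  rw [mk_res_congr hf (hg.comp hm) hgm.symm]
  refine Quot.sound ⟨m, hm, fun b hb => ?_, (Φ.res_comp m g hm hg (hg.comp hm) s).symm⟩
  obtain ⟨a, ha, hab⟩ : g b ∈ f '' vtx T₁ := h ▸ ⟨b, hb, rfl⟩
  exact ⟨a, ha, hg.injOn (hm.1 a ha) hb ((hgm ha).trans hab)⟩

/-- The isomorphism class of a tree with a structure. -/
def isoClass {T : PTree} (s : Φ.F T) : TSIso Φ :=
  Quot.mk (pairRel Φ) ⟨T, s⟩

theorem exists_eq_isoClass (q : TSIso Φ) : ∃ (T : PTree) (s : Φ.F T), q = isoClass s := by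
  obtain ⟨⟨T, s⟩, rfl⟩ := Quot.exists_rep q
  exact ⟨T, s, rfl⟩

/-- `IsSubtree T S`: the set `S` of addresses is the vertex set of a subtree of `T`. -/
def IsSubtree (T : PTree) (S : Set (List ℕ)) : Prop :=
  ∃ (T₁ : PTree) (f : List ℕ → List ℕ), IsEmbedding T₁ T f ∧ f '' vtx T₁ = S

/-- The isomorphism class of the restriction of a pair to the subtree with vertex set `S`
(and of the pair itself if there is no such subtree). -/
def subtreeClass {T : PTree} (s : Φ.F T) (S : Set (List ℕ)) : TSIso Φ :=
  if h : IsSubtree T S then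
    isoClass (Φ.res _ h.choose_spec.choose_spec.1 s)
  else isoClass s

theorem subtreeClass_image {T' : PTree} (s : Φ.F T') {T : PTree} {f : List ℕ → List ℕ}
    (hf : IsEmbedding T T' f) :
    subtreeClass s (f '' vtx T) = isoClass (Φ.res f hf s) := by
  have h : IsSubtree T' (f '' vtx T) := ⟨T, f, hf, rfl⟩
  rw [subtreeClass, dif_pos h]
  exact mk_res_eq_of_image_eq _ _ h.choose_spec.choose_spec.2 _

theorem subtreeClass_res {T' : PTree} (s : Φ.F T') {T : PTree} {f : List ℕ → List ℕ}
    (hf : IsEmbedding T T' f) {S : Set (List ℕ)} (hS : IsSubtree T S) :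
    subtreeClass (Φ.res f hf s) S = subtreeClass s (f '' S) := by
  obtain ⟨T₁, g, hg, rfl⟩ := hS
  rw [subtreeClass_image (Φ.res f hf s) hg, ← Set.image_comp,
    subtreeClass_image s (hf.comp hg), Φ.res_comp g f hg hf]

theorem isSubtree_inter_above {T : PTree} {e : List ℕ} (he : e ∈ edges T) :
    IsSubtree T (vtx T ∩ above e) := by
  obtain ⟨T₁, -, h⟩ := exists_subAt (mem_edges.1 he).1
  exact ⟨T₁, _, isEmbedding_append h, image_append h⟩

theorem isSubtree_diff_above {T : PTree} {e : List ℕ} (he : e ∈ edges T) :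
    IsSubtree T (vtx T \ above e) :=
  ⟨_, _, isEmbedding_pruneEmb (mem_edges.1 he).2, image_pruneEmb (mem_edges.1 he).2⟩

/-- The basis element given by the restriction of a pair to the subtree with vertex set `S`. -/
def subtreeElt {T : PTree} (s : Φ.F T) (S : Set (List ℕ)) : TrtS k Φ :=
  Finsupp.single (subtreeClass s S) 1

/-- The value of the comultiplication on a pair. -/
def rhoPair {T : PTree} (s : Φ.F T) : TrtS k Φ ⊗[k] TrtS k Φ :=
  ∑ e ∈ edges T, subtreeElt k s (vtx T ∩ above e) ⊗ₜ subtreeElt k s (vtx T \ above e)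

theorem rhoSTerm_eq {T : PTree} (s : Φ.F T) {e : List ℕ} (he : e ∈ edges T) :
    rhoSTerm k Φ ⟨T, s⟩ e =
      subtreeElt k s (vtx T ∩ above e) ⊗ₜ subtreeElt k s (vtx T \ above e) := by
  obtain ⟨hv, hne⟩ := mem_edges.1 he
  obtain ⟨T₁, h₁, h₂⟩ := exists_subAt hv
  have ha := isEmbedding_append h₂
  have hp := isEmbedding_pruneEmb (T := T) hne
  rw [subtreeElt, subtreeElt, ← image_append h₂, ← image_pruneEmb hne, subtreeClass_image s ha,
    subtreeClass_image s hp]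
  unfold rhoSTerm
  split
  · next T₂ h₃ =>
    obtain rfl := Option.some.inj (h₁.symm.trans h₃)
    exact dif_pos ⟨ha, hp⟩
  · next h₃ => simp [h₁] at h₃

theorem IsEmbedding.image_edges {T T' : PTree} {f : List ℕ → List ℕ} (hf : IsEmbedding T T' f) :
    ((edges T).image f : Finset (List ℕ)) =
      {e ∈ edges T' | e ∈ f '' vtx T ∧ e ≠ f []} := by
  ext e
  simp only [Finset.mem_image, Finset.mem_filter, mem_edges]
  constructor
  · rintro ⟨a, ⟨ha, hne⟩, rfl⟩
    have h := hf.length_apply ha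
    have := List.length_pos_iff.2 hne
    refine ⟨⟨hf.1 a ha, fun h0 => ?_⟩, ⟨a, ha, rfl⟩, fun h0 => ?_⟩
    · rw [h0, List.length_nil] at h
      omega
    · rw [h0] at h
      omega
  · rintro ⟨-, ⟨a, ha, rfl⟩, hne⟩
    exact ⟨a, ⟨ha, fun h => hne (by rw [h])⟩, rfl⟩

theorem rhoPair_res {T' : PTree} (s : Φ.F T') {T : PTree} {f : List ℕ → List ℕ}
    (hf : IsEmbedding T T' f) :
    rhoPair k (Φ.res f hf s) =
      ∑ e ∈ edges T' with e ∈ f '' vtx T ∧ e ≠ f [],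
        subtreeElt k s (f '' vtx T ∩ above e) ⊗ₜ subtreeElt k s (f '' vtx T \ above e) := by
  rw [← hf.image_edges, Finset.sum_image fun a ha b hb hab =>
    hf.injOn (mem_edges.1 ha).1 (mem_edges.1 hb).1 hab]
  refine Finset.sum_congr rfl fun e he => ?_
  have hi : ∀ b ∈ vtx T, f b ∈ above (f e) ↔ b ∈ above e := fun b hb =>
    hf.prefix_iff (mem_edges.1 he).1 hb
  have h₁ : f '' (vtx T ∩ above e) = f '' vtx T ∩ above (f e) := by
    ext b
    constructor
    · rintro ⟨c, ⟨hc, hce⟩, rfl⟩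
      exact ⟨⟨c, hc, rfl⟩, (hi c hc).2 hce⟩
    · rintro ⟨⟨c, hc, rfl⟩, hce⟩
      exact ⟨c, ⟨hc, (hi c hc).1 hce⟩, rfl⟩
  have h₂ : f '' (vtx T \ above e) = f '' vtx T \ above (f e) := by
    ext b
    constructor
    · rintro ⟨c, ⟨hc, hce⟩, rfl⟩
      exact ⟨⟨c, hc, rfl⟩, fun h => hce ((hi c hc).1 h)⟩
    · rintro ⟨⟨c, hc, rfl⟩, hce⟩
      exact ⟨c, ⟨hc, fun h => hce ((hi c hc).2 h)⟩, rfl⟩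
  rw [subtreeElt, subtreeElt, subtreeClass_res s hf (isSubtree_inter_above he),
    subtreeClass_res s hf (isSubtree_diff_above he), h₁, h₂, subtreeElt, subtreeElt]

theorem rhoPair_res_of_surjective {T' : PTree} (s : Φ.F T') {T : PTree} {f : List ℕ → List ℕ}
    (hf : IsEmbedding T T' f) (hs : ∀ b, IsVtx b T' → ∃ a, IsVtx a T ∧ f a = b) :
    rhoPair k (Φ.res f hf s) = rhoPair k s := by
  have him : f '' vtx T = vtx T' := by
    ext b
    exact ⟨fun ⟨a, ha, hab⟩ => hab ▸ hf.1 a ha, hs b⟩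
  have h0 : f [] = [] := by
    obtain ⟨a, ha, hab⟩ := hs [] (isVtx_nil _)
    exact List.prefix_nil.1 (hab ▸ hf.2.2.2 a ha)
  rw [rhoPair_res, him, h0, rhoPair, Finset.filter_true_of_mem]
  exact fun e he => mem_edges.1 he

theorem rhoPair_eq_of_pairRel {p q : TS Φ} (h : pairRel Φ p q) :
    rhoPair k p.2 = rhoPair k q.2 := by
  obtain ⟨f, hf, hs, h⟩ := h
  rw [← h, rhoPair_res_of_surjective k q.2 hf hs]

theorem lsum_rhoSTerm (p : TS Φ) :
    lsum ((edgeList p.1).map (rhoSTerm k Φ p)) = rhoPair k p.2 := by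
  rw [lsum_map_edgeList]
  exact Finset.sum_congr rfl fun e he => rhoSTerm_eq k p.2 he

theorem rhoS_single_isoClass {T : PTree} (s : Φ.F T) :
    rhoS k Φ (Finsupp.single (isoClass s) 1) = rhoPair k s := by
  have h : rhoPair k (Quot.out (isoClass s)).2 = rhoPair k s :=
    congrArg (Quot.lift (fun p : TS Φ => rhoPair k p.2) fun _ _ => rhoPair_eq_of_pairRel k)
      (Quot.out_eq (isoClass s))
  refine (Finsupp.lift_apply ..).trans ((Finsupp.sum_single_index (by simp)).trans ?_)
  rw [one_smul, ← h]
  exact lsum_rhoSTerm k _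

theorem rhoS_subtreeElt_inter_above {T : PTree} (s : Φ.F T) {e : List ℕ} (he : e ∈ edges T) :
    rhoS k Φ (subtreeElt k s (vtx T ∩ above e)) =
      ∑ e' ∈ edges T with e <+: e' ∧ e' ≠ e,
        subtreeElt k s (vtx T ∩ above e ∩ above e') ⊗ₜ
          subtreeElt k s ((vtx T ∩ above e) \ above e') := by
  obtain ⟨T₁, -, h⟩ := exists_subAt (mem_edges.1 he).1
  rw [← image_append h, subtreeElt, subtreeClass_image s (isEmbedding_append h),
    rhoS_single_isoClass, rhoPair_res]
  refine Finset.sum_congr (Finset.filter_congr fun e' he' => ?_) fun _ _ => rfl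
  rw [image_append h, List.append_nil]
  exact and_congr_left' (and_iff_right (mem_edges.1 he').1)

theorem rhoS_subtreeElt_diff_above {T : PTree} (s : Φ.F T) {e : List ℕ} (he : e ∈ edges T) :
    rhoS k Φ (subtreeElt k s (vtx T \ above e)) =
      ∑ e' ∈ edges T with ¬ e <+: e',
        subtreeElt k s ((vtx T \ above e) ∩ above e') ⊗ₜ
          subtreeElt k s ((vtx T \ above e) \ above e') := by
  have hne := (mem_edges.1 he).2
  have hp := isEmbedding_pruneEmb (T := T) hne
  rw [← image_pruneEmb hne, subtreeElt, subtreeClass_image s hp, rhoS_single_isoClass, rhoPair_res]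
  refine Finset.sum_congr (Finset.filter_congr fun e' he' => ?_) fun _ _ => rfl
  rw [image_pruneEmb hne, pruneEmb_nil, and_iff_left (mem_edges.1 he').2]
  exact and_iff_right (mem_edges.1 he').1

/-- The term of the iterated comultiplication in which the edges `e` and `e'` are cut. -/
def cutTerm {T : PTree} (s : Φ.F T) (e e' : List ℕ) : TrtS k Φ ⊗[k] (TrtS k Φ ⊗[k] TrtS k Φ) :=
  subtreeElt k s (vtx T ∩ above e) ⊗ₜ
    (subtreeElt k s ((vtx T \ above e) ∩ above e') ⊗ₜ
      subtreeElt k s ((vtx T \ above e) \ above e'))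

theorem tau12_cutTerm {T : PTree} (s : Φ.F T) {e e' : List ℕ} (h : ¬ e <+: e') (h' : ¬ e' <+: e) :
    tau12 k (TrtS k Φ) (cutTerm k s e e') = cutTerm k s e' e := by
  have hd : ∀ b, ¬ (b ∈ above e ∧ b ∈ above e') := fun b hb =>
    (List.prefix_or_prefix_of_prefix hb.1 hb.2).elim h h'
  have h₁ : (vtx T \ above e) ∩ above e' = vtx T ∩ above e' := by
    ext b
    have := hd b
    simp only [Set.mem_inter_iff, Set.mem_sdiff]
    tauto
  have h₂ : (vtx T \ above e') ∩ above e = vtx T ∩ above e := by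
    ext b
    have := hd b
    simp only [Set.mem_inter_iff, Set.mem_sdiff]
    tauto
  simp [tau12, cutTerm, h₁, h₂, Set.sdiff_sdiff_comm]

theorem assoc_rTensor_rhoPair {T : PTree} (s : Φ.F T) :
    TensorProduct.assoc k _ _ _ (LinearMap.rTensor (TrtS k Φ) (rhoS k Φ) (rhoPair k s)) =
      ∑ e ∈ edges T, ∑ e' ∈ edges T with e' <+: e ∧ e ≠ e', cutTerm k s e e' := by
  have h : ∀ e ∈ edges T,
      TensorProduct.assoc k _ _ _ (LinearMap.rTensor (TrtS k Φ) (rhoS k Φ)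
        (subtreeElt k s (vtx T ∩ above e) ⊗ₜ subtreeElt k s (vtx T \ above e))) =
      ∑ e' ∈ edges T with e <+: e' ∧ e' ≠ e, cutTerm k s e' e := fun e he => by
    rw [LinearMap.rTensor_tmul, rhoS_subtreeElt_inter_above k s he, TensorProduct.sum_tmul,
      map_sum]
    refine Finset.sum_congr rfl fun e' he' => ?_
    have hp : above e' ⊆ above e := fun b hb => (Finset.mem_filter.1 he').2.1.trans hb
    have h₁ : vtx T ∩ above e ∩ above e' = vtx T ∩ above e' := by
      rw [Set.inter_assoc, Set.inter_eq_right.2 hp]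
    have h₂ : (vtx T ∩ above e) \ above e' = (vtx T \ above e') ∩ above e :=
      by
      ext b
      simp only [Set.mem_inter_iff, Set.mem_sdiff]
      tauto
    have h₃ : vtx T \ above e = (vtx T \ above e') \ above e := by
      rw [Set.sdiff_sdiff, Set.union_eq_right.2 hp]
    rw [TensorProduct.assoc_tmul, cutTerm, h₁, h₂, ← h₃]
  rw [rhoPair, map_sum, map_sum, Finset.sum_congr rfl h]
  exact Finset.sum_comm' fun e e' => by simp only [Finset.mem_filter]; tauto

theorem lTensor_rhoPair {T : PTree} (s : Φ.F T) :
    LinearMap.lTensor (TrtS k Φ) (rhoS k Φ) (rhoPair k s) =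
      ∑ e ∈ edges T, ∑ e' ∈ edges T with ¬ e <+: e', cutTerm k s e e' := by
  rw [rhoPair, map_sum]
  refine Finset.sum_congr rfl fun e he => ?_
  rw [LinearMap.lTensor_tmul, rhoS_subtreeElt_diff_above k s he, TensorProduct.tmul_sum]
  rfl

/-- Up to sign, the coassociator of the comultiplication is the sum over the pairs of incomparable
edges. -/
theorem lTensor_rhoPair_eq_add {T : PTree} (s : Φ.F T) :
    LinearMap.lTensor (TrtS k Φ) (rhoS k Φ) (rhoPair k s) =
      TensorProduct.assoc k _ _ _ (LinearMap.rTensor (TrtS k Φ) (rhoS k Φ) (rhoPair k s)) +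
        ∑ e ∈ edges T, ∑ e' ∈ edges T with ¬ e <+: e' ∧ ¬ e' <+: e, cutTerm k s e e' := by
  rw [assoc_rTensor_rhoPair, lTensor_rhoPair, ← Finset.sum_add_distrib]
  refine Finset.sum_congr rfl fun e _ => ?_
  rw [← Finset.sum_filter_add_sum_filter_not _ (fun e' => e' <+: e), Finset.filter_filter,
    Finset.filter_filter]
  congr 2
  refine Finset.filter_congr fun e' _ => ⟨fun h => ⟨h.2, ?_⟩, fun h => ⟨fun h' => ?_, h.1⟩⟩
  · rintro rfl
    exact h.1 List.prefix_rfl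
  · exact h.2 (h'.eq_of_length_le h.1.length_le)

theorem tau12_sum_cutTerm {T : PTree} (s : Φ.F T) :
    tau12 k (TrtS k Φ)
      (∑ e ∈ edges T, ∑ e' ∈ edges T with ¬ e <+: e' ∧ ¬ e' <+: e, cutTerm k s e e') =
      ∑ e ∈ edges T, ∑ e' ∈ edges T with ¬ e <+: e' ∧ ¬ e' <+: e, cutTerm k s e e' := by
  simp only [map_sum]
  rw [Finset.sum_comm' (s' := fun e' => {e ∈ edges T | ¬ e' <+: e ∧ ¬ e <+: e'})
    (t' := edges T) fun e e' => by simp only [Finset.mem_filter]; tauto]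
  refine Finset.sum_congr rfl fun e _ => Finset.sum_congr rfl fun e' he' => ?_
  have h := (Finset.mem_filter.1 he').2
  exact tau12_cutTerm k s h.2 h.1

end Class

theorem isPreLieComul_of_basis {k g ι : Type*} [CommRing k] [AddCommGroup g] [Module k g]
    (b : Module.Basis ι k g) (δ : g →ₗ[k] g ⊗[k] g)
    (h : ∀ i, ∃ y, LinearMap.lTensor g δ (δ (b i)) =
      TensorProduct.assoc k g g g (LinearMap.rTensor g δ (δ (b i))) + y ∧ tau12 k g y = y) :
    IsPreLieComul δ := by
  refine b.ext fun i => ?_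
  obtain ⟨y, hy, hτ⟩ := h i
  simp [hy, hτ]

/-- For every rooted tree-structure `Φ`, the map `ρ` is a (left)
pre-Lie comultiplication on `T_rt(Φ)`. -/
theorem rhoS_isPreLieComul : IsPreLieComul (rhoS k Φ) := by
  refine isPreLieComul_of_basis Finsupp.basisSingleOne (rhoS k Φ) fun q => ?_
  obtain ⟨T, s, rfl⟩ := exists_eq_isoClass q
  refine ⟨_, ?_, tau12_sum_cutTerm k s⟩
  rw [Finsupp.coe_basisSingleOne, rhoS_single_isoClass]
  exact lTensor_rhoPair_eq_add k s

end
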